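/- For any (u,φ), (v,ψ) ∈ Ũ(H), one has |ψ − φ|/N ≤ d̃((u,φ), (v,ψ)). -/

import Mathlib

noncomputable section

abbrev Hsp (N : ℕ) : Type := EuclideanSpace ℂ (Fin N)

abbrev Op (N : ℕ) : Type := Hsp N →L[ℂ] Hsp N

/-- A map `γ : ℝ → E` is piecewise C¹ on `[a,b]` if there is a partition
`a = τ 0 ≤ τ 1 ≤ ⋯ ≤ τ n = b` such that `γ` is C¹ on each subinterval. -/
def PiecewiseC1On {E : Type*} [NormedAddCommGroup E] [NormedSpace ℝ E]
    (γ : ℝ → E) (a b : ℝ) : Prop :=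
  ∃ (n : ℕ) (τ : ℕ → ℝ), τ 0 = a ∧ τ n = b ∧ (∀ i < n, τ i ≤ τ (i + 1)) ∧
    ∀ i < n, ContDiffOn ℝ 1 γ (Set.Icc (τ i) (τ (i + 1)))

/-- The length `L(γ) = ∫_a^b ‖γ'(t)‖ dt` of a curve. -/
def pathLength {E : Type*} [NormedAddCommGroup E] [NormedSpace ℝ E]
    (γ : ℝ → E) (a b : ℝ) : ℝ :=
  ∫ t in a..b, ‖deriv γ t‖

/-- Geodesic distance on the unitary group of `EuclideanSpace ℂ (Fin N)`, for the
Finsler metric given by the operator norm: the infimum of lengths of piecewise C¹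
curves in the unitary group joining `u` to `v`. -/
def geoDist (N : ℕ) (u v : Op N) : ℝ :=
  sInf {l | ∃ (a b : ℝ) (γ : ℝ → Op N), a ≤ b ∧ PiecewiseC1On γ a b ∧
    (∀ t ∈ Set.Icc a b, γ t ∈ unitary (Op N)) ∧ γ a = u ∧ γ b = v ∧
    l = pathLength γ a b}

/-- `(u, φ)` belongs to the realization `Ũ(H) = {(u,φ) : det u = e^{iφ}}` of the
universal cover of the unitary group. -/
def InUCover (N : ℕ) (u : Op N) (φ : ℝ) : Prop :=
  u ∈ unitary (Op N) ∧
    LinearMap.det (u : Hsp N →ₗ[ℂ] Hsp N) = Complex.exp (φ * Complex.I)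

/-- Geodesic distance on the universal cover `Ũ(H)`: the infimum of the lengths
`∫ ‖γ'(t)‖ dt` over piecewise C¹ curves `t ↦ (γ t, f t)` in `Ũ(H)` joining
`(u, φ)` to `(v, ψ)`. -/
def ucoverDist (N : ℕ) (u : Op N) (φ : ℝ) (v : Op N) (ψ : ℝ) : ℝ :=
  sInf {l | ∃ (a b : ℝ) (γ : ℝ → Op N) (f : ℝ → ℝ), a ≤ b ∧
    PiecewiseC1On (fun t => (γ t, f t)) a b ∧
    (∀ t ∈ Set.Icc a b, InUCover N (γ t) (f t)) ∧
    γ a = u ∧ f a = φ ∧ γ b = v ∧ f b = ψ ∧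
    l = pathLength γ a b}

/-- The multiset of eigenvalues (with multiplicity) of an endomorphism, i.e. the
roots of its characteristic polynomial. -/
def eigenvalueMultiset (N : ℕ) (w : Op N) : Multiset ℂ :=
  (LinearMap.charpoly (w : Hsp N →ₗ[ℂ] Hsp N)).roots

/-- `θ ∈ R`: `(e^{iθ_j})_j` is the family of eigenvalues of `w` (with multiplicity)
and `∑ θ_j = c`. -/
def InRSet (N : ℕ) (w : Op N) (c : ℝ) (θ : Fin N → ℝ) : Prop :=
  Multiset.map (fun j => Complex.exp ((θ j : ℂ) * Complex.I)) Finset.univ.val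
      = eigenvalueMultiset N w ∧ ∑ j, θ j = c

/-- `m = min { max_j |θ_j| : θ ∈ R }`. -/
def mval (N : ℕ) (w : Op N) (c : ℝ) : ℝ :=
  sInf {x | ∃ θ : Fin N → ℝ, InRSet N w c θ ∧ x = ⨆ j, |θ j|}

end

/-!
At an invertible `T` the derivative of `det` is `X ↦ det T · tr (T⁻¹ X)`. Along a curve `(γ, f)` in
`Ũ(H)`, differentiating `det γ = e^{if}` therefore gives `i f' = tr (γ* γ')`, and since the trace of
an operator on an `N`-dimensional space is bounded by `N` times its norm, `|f'| ≤ N ‖γ'‖`.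
Integrating, every curve joining the two points has length at least `|ψ - φ| / N`.

Since the real infimum of the empty set is `0`, the bound also requires some curve to join
`(u, φ)` to `(v, ψ)`. Write `u* v = e^A` with `A` skew-adjoint; then `tr A` differs from
`(ψ - φ) i` by an integer multiple `2πik`, which is the trace of `B = 2πik p` for a rank-one
orthogonal projection `p`. As `e^B = 1`, the curve `t ↦ (u e^{tA} e^{tB}, φ + t (ψ - φ))` works.
-/

open NormedSpace Set MeasureTheory
open scoped Topology

section Determinant

variable {𝕜 E : Type*} [NontriviallyNormedField 𝕜] [CompleteSpace 𝕜]
  [NormedAddCommGroup E] [NormedSpace 𝕜 E] [FiniteDimensional 𝕜 E]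

variable (𝕜 E) in
/-- The trace of endomorphisms of a finite-dimensional normed space, as a continuous linear form;
it is the derivative of the determinant at the identity. -/
noncomputable def traceCLM : (E →L[𝕜] E) →L[𝕜] 𝕜 :=
  (LinearMap.trace 𝕜 E ∘ₗ ContinuousLinearMap.coeLM 𝕜).toContinuousLinearMap

@[simp]
theorem traceCLM_apply (T : E →L[𝕜] E) : traceCLM 𝕜 E T = LinearMap.trace 𝕜 E T := rfl

theorem matrix_det_updateRow_one {n R : Type*} [Fintype n] [DecidableEq n] [CommRing R]
    (i : n) (v : n → R) : ((1 : Matrix n n R).updateRow i v).det = v i := by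
  rw [← Matrix.cramer_transpose_apply, Matrix.transpose_one, Matrix.cramer_one,
    Module.End.one_apply]

theorem hasFDerivAt_det_one :
    HasFDerivAt (fun T : E →L[𝕜] E ↦ LinearMap.det (T : E →ₗ[𝕜] E)) (traceCLM 𝕜 E) 1 := by
  let n := Fin (Module.finrank 𝕜 E)
  let b : Module.Basis n 𝕜 E := Module.finBasis 𝕜 E
  let matrixRows : (E →L[𝕜] E) →L[𝕜] (n → n → 𝕜) :=
    ((LinearMap.toMatrix b b).toLinearMap ∘ₗ ContinuousLinearMap.coeLM 𝕜).toContinuousLinearMap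
  let detRows : ContinuousMultilinearMap 𝕜 (fun _ : n ↦ n → 𝕜) 𝕜 :=
    { (Matrix.detRowAlternating (n := n) (R := 𝕜)).toMultilinearMap with
      cont := (continuous_id.matrix_det : Continuous fun M : Matrix n n 𝕜 ↦ M.det) }
  have det_eq : (fun T : E →L[𝕜] E ↦ LinearMap.det (T : E →ₗ[𝕜] E)) = detRows ∘ matrixRows :=
    funext fun T ↦ (LinearMap.det_toMatrix b _).symm
  have trace_eq : traceCLM 𝕜 E = (detRows.linearDeriv (matrixRows 1)).comp matrixRows := by
    ext T
    have rows_one : Matrix.of (matrixRows 1) = 1 := LinearMap.toMatrix_one b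
    rw [ContinuousLinearMap.comp_apply, ContinuousMultilinearMap.linearDeriv_apply, traceCLM_apply,
      LinearMap.trace_eq_matrix_trace 𝕜 b]
    refine Finset.sum_congr rfl fun i _ ↦ ?_
    change _ = ((Matrix.of (matrixRows 1)).updateRow i (matrixRows T i)).det
    rw [rows_one, matrix_det_updateRow_one]
    rfl
  rw [det_eq, trace_eq]
  exact (detRows.hasFDerivAt _).comp _ matrixRows.hasFDerivAt

theorem hasFDerivAt_det_of_mul_eq_one {S T : E →L[𝕜] E} (hST : S * T = 1) :
    HasFDerivAt (fun T : E →L[𝕜] E ↦ LinearMap.det (T : E →ₗ[𝕜] E))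
      (LinearMap.det (T : E →ₗ[𝕜] E) • (traceCLM 𝕜 E).comp (ContinuousLinearMap.mul 𝕜 _ S)) T := by
  have det_mul_det : LinearMap.det (T : E →ₗ[𝕜] E) * LinearMap.det (S : E →ₗ[𝕜] E) = 1 := by
    rw [mul_comm, ← map_mul, ← ContinuousLinearMap.toLinearMap_mul, hST,
      ContinuousLinearMap.toLinearMap_one, map_one]
  have det_eq : (fun X : E →L[𝕜] E ↦ LinearMap.det (X : E →ₗ[𝕜] E)) =
      fun X ↦ LinearMap.det (T : E →ₗ[𝕜] E) *
        LinearMap.det ((ContinuousLinearMap.mul 𝕜 _ S X : E →L[𝕜] E) : E →ₗ[𝕜] E) := by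
    ext X
    rw [ContinuousLinearMap.mul_apply', ContinuousLinearMap.toLinearMap_mul, map_mul, ← mul_assoc,
      det_mul_det, one_mul]
  have det_one : HasFDerivAt (fun X : E →L[𝕜] E ↦ LinearMap.det (X : E →ₗ[𝕜] E))
      (traceCLM 𝕜 E) (ContinuousLinearMap.mul 𝕜 _ S T) := by
    rw [ContinuousLinearMap.mul_apply', hST]
    exact hasFDerivAt_det_one
  rw [det_eq]
  exact (det_one.comp T (ContinuousLinearMap.mul 𝕜 _ S).hasFDerivAt).const_mul _

end Determinant

theorem det_exp {𝕜 E : Type*} [RCLike 𝕜] [NormedAddCommGroup E] [NormedSpace 𝕜 E]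
    [FiniteDimensional 𝕜 E] (A : E →L[𝕜] E) :
    LinearMap.det ((exp A : E →L[𝕜] E) : E →ₗ[𝕜] E) = exp (LinearMap.trace 𝕜 E A) := by
  have := FiniteDimensional.complete 𝕜 E
  let +nondep : NormedAlgebra ℚ (E →L[𝕜] E) := .restrictScalars ℚ 𝕜 _
  let +nondep : NormedAlgebra ℚ 𝕜 := .restrictScalars ℚ 𝕜 _
  set τ := LinearMap.trace 𝕜 E A
  let g : 𝕜 → 𝕜 := fun z ↦
    LinearMap.det ((exp (z • A) : E →L[𝕜] E) : E →ₗ[𝕜] E) * exp (z • -τ)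
  have hasDerivAt_g (z : 𝕜) : HasDerivAt g 0 z := by
    have exp_neg_mul_exp : exp (-(z • A)) * exp (z • A) = 1 := by
      rw [← exp_add_of_commute (Commute.refl (z • A)).neg_left, neg_add_cancel, exp_zero]
    have hdet := (hasFDerivAt_det_of_mul_eq_one exp_neg_mul_exp).comp_hasDerivAt z
      (hasDerivAt_exp_smul_const A z)
    convert! hdet.mul (hasDerivAt_exp_smul_const (-τ) z) using 1
    have trace_eq : traceCLM 𝕜 E (exp (-(z • A)) * (exp (z • A) * A)) = τ := by
      rw [← mul_assoc, exp_neg_mul_exp, one_mul, traceCLM_apply]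
    rw [smul_apply, ContinuousLinearMap.comp_apply, ContinuousLinearMap.mul_apply', trace_eq,
      smul_eq_mul, Function.comp_apply]
    ring
  have g_const : g 1 = g 0 := is_const_of_deriv_eq_zero (fun z ↦ (hasDerivAt_g z).differentiableAt)
    (fun z ↦ (hasDerivAt_g z).deriv) 1 0
  have det_mul_exp_neg :
      LinearMap.det ((exp A : E →L[𝕜] E) : E →ₗ[𝕜] E) * exp (-τ) = 1 := by
    simpa [g] using g_const
  rw [exp_neg] at det_mul_exp_neg
  exact eq_of_mul_inv_eq_one det_mul_exp_neg

theorem det_exp_smul {E : Type*} [NormedAddCommGroup E] [NormedSpace ℂ E] [FiniteDimensional ℂ E]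
    (A : E →L[ℂ] E) (t : ℝ) :
    LinearMap.det ((exp (t • A) : E →L[ℂ] E) : E →ₗ[ℂ] E) =
      Complex.exp (t * LinearMap.trace ℂ E A) := by
  rw [det_exp, ContinuousLinearMap.toLinearMap_smul, ← Complex.coe_smul, map_smul, smul_eq_mul,
    Complex.exp_eq_exp_ℂ]

theorem norm_trace_le {𝕜 H : Type*} [RCLike 𝕜] [NormedAddCommGroup H] [InnerProductSpace 𝕜 H]
    [FiniteDimensional 𝕜 H] (T : H →L[𝕜] H) :
    ‖LinearMap.trace 𝕜 H T‖ ≤ Module.finrank 𝕜 H * ‖T‖ := by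
  let b := stdOrthonormalBasis 𝕜 H
  calc ‖LinearMap.trace 𝕜 H T‖ = ‖∑ i, inner 𝕜 (b i) (T (b i))‖ := by
        rw [LinearMap.trace_eq_sum_inner _ b, ContinuousLinearMap.coe_coe]
    _ ≤ ∑ i, ‖b i‖ * ‖T (b i)‖ := norm_sum_le_of_le _ fun i _ ↦ norm_inner_le_norm _ _
    _ ≤ ∑ _i : Fin (Module.finrank 𝕜 H), ‖T‖ := by
        gcongr with i
        simpa [b.norm_eq_one] using T.le_opNorm (b i)
    _ = Module.finrank 𝕜 H * ‖T‖ := by simp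

section Unitary

variable {H : Type*} [NormedAddCommGroup H] [InnerProductSpace ℂ H] [FiniteDimensional ℂ H]
  [CompleteSpace H] {γ : ℝ → H →L[ℂ] H} {γ' : H →L[ℂ] H} {f : ℝ → ℝ} {f' t : ℝ}

theorem trace_star_mul_deriv_eq (hγ : HasDerivAt γ γ' t) (hf : HasDerivAt f f' t)
    (hunitary : γ t ∈ unitary (H →L[ℂ] H))
    (hdet : ∀ᶠ s in 𝓝 t, LinearMap.det (γ s : H →ₗ[ℂ] H) = Complex.exp (f s * Complex.I)) :
    LinearMap.trace ℂ H (star (γ t) * γ' : H →L[ℂ] H) = f' * Complex.I := by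
  have hdet_deriv := ((hasFDerivAt_det_of_mul_eq_one
    (Unitary.star_mul_self_of_mem hunitary)).restrictScalars ℝ).comp_hasDerivAt t hγ
  have hexp_deriv := (hf.ofReal_comp.mul_const Complex.I).cexp
  have deriv_eq := hdet_deriv.unique (hexp_deriv.congr_of_eventuallyEq hdet)
  rw [← hdet.self_of_nhds] at deriv_eq
  refine mul_left_cancel₀ ?_ deriv_eq
  rw [hdet.self_of_nhds]
  exact Complex.exp_ne_zero _

theorem abs_deriv_phase_le (hγ : HasDerivAt γ γ' t) (hf : HasDerivAt f f' t)
    (hunitary : γ t ∈ unitary (H →L[ℂ] H))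
    (hdet : ∀ᶠ s in 𝓝 t, LinearMap.det (γ s : H →ₗ[ℂ] H) = Complex.exp (f s * Complex.I)) :
    |f'| ≤ Module.finrank ℂ H * ‖γ'‖ :=
  calc |f'| = ‖LinearMap.trace ℂ H (star (γ t) * γ' : H →L[ℂ] H)‖ := by
        rw [trace_star_mul_deriv_eq hγ hf hunitary hdet]
        simp
    _ ≤ Module.finrank ℂ H * ‖star (γ t) * γ'‖ := norm_trace_le _
    _ = Module.finrank ℂ H * ‖γ'‖ := by
        rw [CStarRing.norm_mem_unitary_mul _ (Unitary.star_mem hunitary)]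

end Unitary

section PiecewiseC1

variable {E F : Type*} [NormedAddCommGroup E] [NormedSpace ℝ E]
  [NormedAddCommGroup F] [NormedSpace ℝ F] {γ : ℝ → E} {f : ℝ → F} {a b C : ℝ}

theorem intervalIntegrable_deriv_of_contDiffOn_Icc (hab : a ≤ b)
    (hγ : ContDiffOn ℝ 1 γ (Icc a b)) : IntervalIntegrable (deriv γ) volume a b := by
  rcases hab.eq_or_lt with rfl | hlt
  · exact .refl
  have hcont : ContinuousOn (derivWithin γ (Icc a b)) (uIcc a b) := by
    rw [uIcc_of_le hab]
    exact hγ.continuousOn_derivWithin (uniqueDiffOn_Icc hlt) le_rfl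
  refine hcont.intervalIntegrable.congr_uIoo fun t ht ↦ ?_
  rw [uIoo_of_le hab] at ht
  exact derivWithin_of_mem_nhds (Icc_mem_nhds ht.1 ht.2)

theorem norm_sub_le_mul_pathLength_of_contDiffOn [CompleteSpace F] (hab : a ≤ b)
    (hγ : ContDiffOn ℝ 1 γ (Icc a b)) (hf : ContDiffOn ℝ 1 f (Icc a b))
    (hbound : ∀ t ∈ Ioo a b, ‖deriv f t‖ ≤ C * ‖deriv γ t‖) :
    ‖f b - f a‖ ≤ C * pathLength γ a b :=
  calc ‖f b - f a‖ = ‖∫ t in a..b, deriv f t‖ := by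
        rw [intervalIntegral.integral_deriv_of_contDiffOn_Icc hf hab]
    _ ≤ ∫ t in a..b, ‖deriv f t‖ := intervalIntegral.norm_integral_le_integral_norm hab
    _ ≤ ∫ t in a..b, C * ‖deriv γ t‖ :=
        intervalIntegral.integral_mono_on_of_le_Ioo hab
          (intervalIntegrable_deriv_of_contDiffOn_Icc hab hf).norm
          ((intervalIntegrable_deriv_of_contDiffOn_Icc hab hγ).norm.const_mul C) hbound
    _ = C * pathLength γ a b := intervalIntegral.integral_const_mul C _

theorem PiecewiseC1On.norm_sub_le_mul_pathLength [CompleteSpace F]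
    (h : PiecewiseC1On (fun t ↦ (γ t, f t)) a b)
    (hbound : ∀ t ∈ Ioo a b, DifferentiableAt ℝ γ t → DifferentiableAt ℝ f t →
      ‖deriv f t‖ ≤ C * ‖deriv γ t‖) :
    ‖f b - f a‖ ≤ C * pathLength γ a b := by
  obtain ⟨n, τ, rfl, rfl, hstep, hC1⟩ := h
  have hmono : MonotoneOn τ (Iic n) :=
    monotoneOn_of_le_add_one ordConnected_Iic fun i _ _ hi ↦ hstep i hi
  have hpiece (i : ℕ) (hi : i < n) :
      ‖f (τ (i + 1)) - f (τ i)‖ ≤ C * pathLength γ (τ i) (τ (i + 1)) := by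
    refine norm_sub_le_mul_pathLength_of_contDiffOn (hstep i hi) (hC1 i hi).fst (hC1 i hi).snd
      fun t ht ↦ ?_
    have hnhds : Icc (τ i) (τ (i + 1)) ∈ 𝓝 t := Icc_mem_nhds ht.1 ht.2
    exact hbound t
      ⟨(hmono (mem_Iic.2 n.zero_le) (mem_Iic.2 hi.le) i.zero_le).trans_lt ht.1,
        ht.2.trans_le (hmono (mem_Iic.2 hi) self_mem_Iic hi)⟩
      (((hC1 i hi).fst.contDiffAt hnhds).differentiableAt one_ne_zero)
      (((hC1 i hi).snd.contDiffAt hnhds).differentiableAt one_ne_zero)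
  calc ‖f (τ n) - f (τ 0)‖ = ‖∑ i ∈ Finset.range n, (f (τ (i + 1)) - f (τ i))‖ := by
        rw [Finset.sum_range_sub fun i ↦ f (τ i)]
    _ ≤ ∑ i ∈ Finset.range n, C * pathLength γ (τ i) (τ (i + 1)) :=
        norm_sum_le_of_le _ fun i hi ↦ hpiece i (Finset.mem_range.1 hi)
    _ = C * pathLength γ (τ 0) (τ n) := by
        rw [← Finset.mul_sum]
        exact congrArg (C * ·) (intervalIntegral.sum_integral_adjacent_intervals fun i hi ↦
          (intervalIntegrable_deriv_of_contDiffOn_Icc (hstep i hi) (hC1 i hi).fst).norm)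

theorem piecewiseC1On_of_contDiff (hγ : ContDiff ℝ 1 γ) (hab : a ≤ b) : PiecewiseC1On γ a b :=
  ⟨1, fun i ↦ if i = 0 then a else b, by simp, by simp, by simpa using hab,
    fun _ _ ↦ hγ.contDiffOn⟩

end PiecewiseC1

theorem PiecewiseC1On.abs_phase_sub_le_mul_pathLength {H : Type*} [NormedAddCommGroup H]
    [InnerProductSpace ℂ H] [FiniteDimensional ℂ H] [CompleteSpace H] {γ : ℝ → H →L[ℂ] H}
    {f : ℝ → ℝ} {a b : ℝ} (h : PiecewiseC1On (fun t ↦ (γ t, f t)) a b)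
    (hcover : ∀ t ∈ Icc a b, γ t ∈ unitary (H →L[ℂ] H) ∧
      LinearMap.det (γ t : H →ₗ[ℂ] H) = Complex.exp (f t * Complex.I)) :
    |f b - f a| ≤ Module.finrank ℂ H * pathLength γ a b := by
  refine h.norm_sub_le_mul_pathLength fun t ht hγ hf ↦ ?_
  exact abs_deriv_phase_le hγ.hasDerivAt hf.hasDerivAt (hcover t (Ioo_subset_Icc_self ht)).1 <|
    Filter.mem_of_superset (Icc_mem_nhds ht.1 ht.2) fun s hs ↦ (hcover s hs).2

section CStarAlgebra

variable {A : Type*} [CStarAlgebra A]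

theorem exists_mem_skewAdjoint_exp_eq {u : A} (hu : u ∈ unitary A) (hfin : (spectrum ℂ u).Finite) :
    ∃ x ∈ skewAdjoint A, exp x = u := by
  have hnormal := isStarNormal_of_mem_unitary hu
  have hlog : ContinuousOn Complex.log (spectrum ℂ u) := hfin.continuousOn _
  have norm_eq_one {z : ℂ} (hz : z ∈ spectrum ℂ u) : ‖z‖ = 1 :=
    spectrum.norm_eq_one_of_unitary hu hz
  refine ⟨cfc Complex.log u, ?_, ?_⟩
  · rw [skewAdjoint.mem_iff, ← cfc_star, ← cfc_neg]
    refine cfc_congr fun z hz ↦ Complex.ext ?_ ?_ <;> simp [Complex.log_re, norm_eq_one hz]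
  · rw [← CFC.complex_exp_eq_normedSpace_exp (p := IsStarNormal), ← cfc_comp' ..]
    conv_rhs => rw [← cfc_id' ℂ u]
    refine cfc_congr fun z hz ↦ Complex.exp_log ?_
    rw [← norm_ne_zero_iff, norm_eq_one hz]
    exact one_ne_zero

theorem exp_int_mul_two_pi_I_smul_of_isStarProjection {p : A} (hp : IsStarProjection p) (k : ℤ) :
    exp ((k * (2 * Real.pi * Complex.I)) • p) = 1 := by
  have := hp.isSelfAdjoint.isStarNormal
  rw [← CFC.complex_exp_eq_normedSpace_exp (p := IsStarNormal), ← cfc_comp_smul .., ← cfc_one ℂ p]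
  refine cfc_congr fun z hz ↦ ?_
  rcases hp.isIdempotentElem.spectrum_subset ℂ hz with rfl | rfl
  · simp
  · simp [Complex.exp_int_mul_two_pi_mul_I]

end CStarAlgebra


theorem contDiff_exp_smul {𝔸 : Type*} [NormedRing 𝔸] [NormedAlgebra ℝ 𝔸] [CompleteSpace 𝔸] (x : 𝔸)
    {n : WithTop ℕ∞} : ContDiff ℝ n fun t : ℝ ↦ exp (t • x) := by
  have hexp : ContDiff ℝ n (exp : 𝔸 → 𝔸) := AnalyticOnNhd.contDiff fun y _ ↦ exp_analytic y
  exact hexp.comp (contDiff_id.smul contDiff_const)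

theorem finite_spectrum_of_finiteDimensional {𝕜 E : Type*} [NontriviallyNormedField 𝕜]
    [CompleteSpace 𝕜] [NormedAddCommGroup E] [NormedSpace 𝕜 E] [FiniteDimensional 𝕜 E]
    (T : E →L[𝕜] E) : (spectrum 𝕜 T).Finite := by
  rw [← AlgEquiv.spectrum_eq (Module.End.toContinuousLinearMap E).symm T]
  exact Module.End.finite_spectrum _

section UnitaryCurve

variable {H : Type*} [NormedAddCommGroup H] [InnerProductSpace ℂ H] [FiniteDimensional ℂ H]
  [CompleteSpace H]

theorem exists_mem_skewAdjoint_exp_eq_one_trace_eq [Nontrivial H] (k : ℤ) :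
    ∃ B ∈ skewAdjoint (H →L[ℂ] H),
      exp B = 1 ∧ LinearMap.trace ℂ H B = k * (2 * Real.pi * Complex.I) := by
  obtain ⟨e, he⟩ := exists_norm_eq H zero_le_one
  have hproj := InnerProductSpace.isStarProjection_rankOne_self (𝕜 := ℂ) he
  have star_coeff : star (k * (2 * Real.pi * Complex.I)) = -(k * (2 * Real.pi * Complex.I)) := by
    simp
  refine ⟨(k * (2 * Real.pi * Complex.I)) • InnerProductSpace.rankOne ℂ e e,
    hproj.isSelfAdjoint.smul_mem_skewAdjoint star_coeff,
    exp_int_mul_two_pi_I_smul_of_isStarProjection hproj k, ?_⟩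
  rw [ContinuousLinearMap.toLinearMap_smul, map_smul, InnerProductSpace.trace_rankOne,
    inner_self_eq_norm_sq_to_K, he]
  simp

theorem exists_mem_skewAdjoint_exp_mul_exp_eq [Nontrivial H] {w : H →L[ℂ] H} {θ : ℝ}
    (hw : w ∈ unitary (H →L[ℂ] H))
    (hdet : LinearMap.det (w : H →ₗ[ℂ] H) = Complex.exp (θ * Complex.I)) :
    ∃ A ∈ skewAdjoint (H →L[ℂ] H), ∃ B ∈ skewAdjoint (H →L[ℂ] H), exp A * exp B = w ∧
      LinearMap.trace ℂ H A + LinearMap.trace ℂ H B = θ * Complex.I := by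
  obtain ⟨A, hA, rfl⟩ := exists_mem_skewAdjoint_exp_eq hw (finite_spectrum_of_finiteDimensional w)
  rw [det_exp, ← Complex.exp_eq_exp_ℂ] at hdet
  obtain ⟨k, hk⟩ := Complex.exp_eq_exp_iff_exists_int.1 hdet.symm
  obtain ⟨B, hB, exp_B, trace_B⟩ := exists_mem_skewAdjoint_exp_eq_one_trace_eq (H := H) k
  exact ⟨A, hA, B, hB, by rw [exp_B, mul_one], by rw [trace_B, hk]⟩

theorem exists_contDiff_unitary_det_eq_of_one [Nontrivial H] {w : H →L[ℂ] H} {θ : ℝ}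
    (hw : w ∈ unitary (H →L[ℂ] H))
    (hdet : LinearMap.det (w : H →ₗ[ℂ] H) = Complex.exp (θ * Complex.I)) :
    ∃ η : ℝ → H →L[ℂ] H, ContDiff ℝ 1 η ∧ η 0 = 1 ∧ η 1 = w ∧ ∀ t : ℝ,
      η t ∈ unitary (H →L[ℂ] H) ∧
        LinearMap.det (η t : H →ₗ[ℂ] H) = Complex.exp (t * (θ * Complex.I)) := by
  let +nondep : NormedAlgebra ℚ (H →L[ℂ] H) := .restrictScalars ℚ ℂ _
  obtain ⟨A, hA, B, hB, exp_mul_exp, trace_add⟩ := exists_mem_skewAdjoint_exp_mul_exp_eq hw hdet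
  refine ⟨fun t ↦ exp (t • A) * exp (t • B), (contDiff_exp_smul A).mul (contDiff_exp_smul B),
    by simp, by simpa using exp_mul_exp, fun t ↦ ⟨?_, ?_⟩⟩
  · exact mul_mem (exp_mem_unitary_of_mem_skewAdjoint (skewAdjoint.smul_mem t hA))
      (exp_mem_unitary_of_mem_skewAdjoint (skewAdjoint.smul_mem t hB))
  · rw [ContinuousLinearMap.toLinearMap_mul, map_mul, det_exp_smul, det_exp_smul,
      ← Complex.exp_add, ← mul_add, trace_add]

theorem exists_contDiff_unitary_det_eq [Nontrivial H] {u v : H →L[ℂ] H} {φ ψ : ℝ}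
    (hu : u ∈ unitary (H →L[ℂ] H)) (hv : v ∈ unitary (H →L[ℂ] H))
    (hdet_u : LinearMap.det (u : H →ₗ[ℂ] H) = Complex.exp (φ * Complex.I))
    (hdet_v : LinearMap.det (v : H →ₗ[ℂ] H) = Complex.exp (ψ * Complex.I)) :
    ∃ γ : ℝ → H →L[ℂ] H, ContDiff ℝ 1 γ ∧ γ 0 = u ∧ γ 1 = v ∧ ∀ t : ℝ,
      γ t ∈ unitary (H →L[ℂ] H) ∧ LinearMap.det (γ t : H →ₗ[ℂ] H) =
        Complex.exp ((φ + t * (ψ - φ) : ℝ) * Complex.I) := by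
  have u_mul_star_mul : u * (star u * v) = v := by
    rw [← mul_assoc, Unitary.mul_star_self_of_mem hu, one_mul]
  have hdet_w : LinearMap.det ((star u * v : H →L[ℂ] H) : H →ₗ[ℂ] H) =
      Complex.exp ((ψ - φ : ℝ) * Complex.I) := by
    refine mul_left_cancel₀ (Complex.exp_ne_zero (φ * Complex.I)) ?_
    rw [← hdet_u, ← map_mul, ← ContinuousLinearMap.toLinearMap_mul, u_mul_star_mul, hdet_u, hdet_v,
      ← Complex.exp_add, ← add_mul, ← Complex.ofReal_add, add_sub_cancel]
  obtain ⟨η, hη, η_zero, η_one, hcover⟩ :=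
    exists_contDiff_unitary_det_eq_of_one (mul_mem (Unitary.star_mem hu) hv) hdet_w
  refine ⟨fun t ↦ u * η t, contDiff_const.mul hη, by simp only [η_zero, mul_one],
    by simp only [η_one, u_mul_star_mul], fun t ↦ ⟨mul_mem hu (hcover t).1, ?_⟩⟩
  rw [ContinuousLinearMap.toLinearMap_mul, map_mul, hdet_u, (hcover t).2, ← Complex.exp_add]
  push_cast
  ring_nf

end UnitaryCurve

section UniversalCover

variable {N : ℕ} {u v : Op N} {φ ψ : ℝ}

theorem exists_piecewiseC1On_inUCover (hN : 1 ≤ N) (hu : InUCover N u φ) (hv : InUCover N v ψ) :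
    ∃ (γ : ℝ → Op N) (f : ℝ → ℝ), PiecewiseC1On (fun t ↦ (γ t, f t)) 0 1 ∧
      (∀ t, InUCover N (γ t) (f t)) ∧ γ 0 = u ∧ f 0 = φ ∧ γ 1 = v ∧ f 1 = ψ := by
  have : Nonempty (Fin N) := Fin.pos_iff_nonempty.1 hN
  obtain ⟨γ, hγ, γ_zero, γ_one, hcover⟩ := exists_contDiff_unitary_det_eq hu.1 hv.1 hu.2 hv.2
  have hf : ContDiff ℝ 1 fun t ↦ φ + t * (ψ - φ) := by fun_prop
  exact ⟨γ, fun t ↦ φ + t * (ψ - φ), piecewiseC1On_of_contDiff (hγ.prodMk hf) zero_le_one, hcover,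
    γ_zero, by simp, γ_one, by simp⟩

end UniversalCover

/-- for `(u,φ), (v,ψ) ∈ Ũ(H)`, `|ψ − φ|/N ≤ d̃((u,φ),(v,ψ))`. -/
theorem abs_sub_div_le_ucoverDist (N : ℕ) (hN : 1 ≤ N) (u v : Op N) (φ ψ : ℝ)
    (hu : InUCover N u φ) (hv : InUCover N v ψ) :
    |ψ - φ| / (N : ℝ) ≤ ucoverDist N u φ v ψ := by
  have hN_pos : (0 : ℝ) < N := Nat.cast_pos.2 hN
  refine le_csInf ?_ ?_
  · obtain ⟨γ, f, hC1, hcover, hγ₀, hf₀, hγ₁, hf₁⟩ := exists_piecewiseC1On_inUCover hN hu hv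
    exact ⟨_, 0, 1, γ, f, zero_le_one, hC1, fun t _ ↦ hcover t, hγ₀, hf₀, hγ₁, hf₁, rfl⟩
  · rintro _ ⟨a, b, γ, f, _, hC1, hcover, rfl, rfl, rfl, rfl, rfl⟩
    rw [div_le_iff₀' hN_pos]
    simpa using hC1.abs_phase_sub_le_mul_pathLength hcover
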